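/- Let a quantum network satisfy Assumptions A1 and A2 with network state |ψ⟩ = ⊗_{i=1}^{N_s} |GHZ_{Λ_i}⟩. Then for every pair of distinct measurement nodes A_i and A_j, the measured mutual information of the reduced state of |ψ⟩⟨ψ| on the qubits at A_i ∪ A_j equals the number of shared sources: I_m(A_i; A_j) = N_s^{A_i,A_j}. Moreover the supremum defining I_m is attained by the computational-basis measurement at both nodes. -/

import Mathlib

open scoped Kronecker Matrix Classical

noncomputable section

/-- Base-2 Shannon entropy of a finitely supported distribution. -/
def shannon {α : Type*} [Fintype α] (p : α → ℝ) : ℝ :=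
  -∑ x, p x * Real.logb 2 (p x)

/-- Base-2 von Neumann entropy of a matrix (junk value `0` if not Hermitian),
computed from the eigenvalues. -/
def vnEntropy {d : Type*} [Fintype d] [DecidableEq d] (ρ : Matrix d d ℂ) : ℝ :=
  if h : ρ.IsHermitian then -∑ k, h.eigenvalues k * Real.logb 2 (h.eigenvalues k) else 0

/-- A projection-valued measure on a finite-dimensional space: a finite family of
mutually orthogonal self-adjoint projections summing to the identity. -/
structure PVM (ι : Type*) (d : Type*) [Fintype d] [DecidableEq d] where
  [fintype : Fintype ι]
  proj : ι → Matrix d d ℂ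
  herm : ∀ a, (proj a).IsHermitian
  idem : ∀ a, proj a * proj a = proj a
  orthogonal : ∀ a b, a ≠ b → proj a * proj b = 0
  complete : ∑ a, proj a = 1

/-- Outcome distribution of a PVM measurement on a state. -/
def pvmProb {ι d : Type*} [Fintype d] [DecidableEq d] (P : PVM ι d)
    (ρ : Matrix d d ℂ) : ι → ℝ :=
  fun a => ((P.proj a * ρ).trace).re

/-- Shannon entropy of the outcome distribution of a PVM measurement. -/
def pvmEntropy {ι d : Type*} [Fintype d] [DecidableEq d] (P : PVM ι d)
    (ρ : Matrix d d ℂ) : ℝ :=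
  letI := P.fintype
  shannon (pvmProb P ρ)

/-- Joint outcome distribution of a product of two local PVMs on a bipartite state. -/
def jointProb {ιA ιB dA dB : Type*} [Fintype dA] [DecidableEq dA] [Fintype dB]
    [DecidableEq dB] (P : PVM ιA dA) (Q : PVM ιB dB)
    (ρ : Matrix (dA × dB) (dA × dB) ℂ) : ιA × ιB → ℝ :=
  fun ab => (((P.proj ab.1 ⊗ₖ Q.proj ab.2) * ρ).trace).re

/-- Shannon entropy of the joint outcome distribution of a product of two local PVMs. -/
def jointEntropy {ιA ιB dA dB : Type*} [Fintype dA] [DecidableEq dA] [Fintype dB]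
    [DecidableEq dB] (P : PVM ιA dA) (Q : PVM ιB dB)
    (ρ : Matrix (dA × dB) (dA × dB) ℂ) : ℝ :=
  letI := P.fintype; letI := Q.fintype
  shannon (jointProb P Q ρ)

/-- Mutual information `H(P_A) + H(P_B) - H(P_{AB})` of the joint outcome distribution
of a product of two local PVMs on a bipartite state. -/
def miOf {ιA ιB dA dB : Type*} [Fintype dA] [DecidableEq dA] [Fintype dB]
    [DecidableEq dB] (P : PVM ιA dA) (Q : PVM ιB dB)
    (ρ : Matrix (dA × dB) (dA × dB) ℂ) : ℝ :=
  letI := P.fintype; letI := Q.fintype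
  shannon (fun a : ιA => ∑ b : ιB, jointProb P Q ρ (a, b)) +
    shannon (fun b : ιB => ∑ a : ιA, jointProb P Q ρ (a, b)) -
    shannon (jointProb P Q ρ)

/-- Measured mutual information: the supremum of `miOf` over all pairs of local PVMs. -/
def measuredMI {dA dB : Type*} [Fintype dA] [DecidableEq dA] [Fintype dB] [DecidableEq dB]
    (ρ : Matrix (dA × dB) (dA × dB) ℂ) : ℝ :=
  sSup { r : ℝ | ∃ (ιA ιB : Type) (P : PVM ιA dA) (Q : PVM ιB dB), r = miOf P Q ρ }

/-- The computational-basis PVM. -/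
def compPVM (d : Type*) [Fintype d] [DecidableEq d] : PVM d d where
  proj x := Matrix.diagonal (fun y => if y = x then (1 : ℂ) else 0)
  herm x := by
    refine Matrix.isHermitian_diagonal_of_self_adjoint _ ?_
    funext y
    by_cases h : y = x <;> simp [h]
  idem x := by
    rw [Matrix.diagonal_mul_diagonal]
    ext y z
    by_cases h : y = z
    · subst h
      by_cases h2 : y = x <;> simp [Matrix.diagonal_apply, h2]
    · simp [Matrix.diagonal_apply, h]
  orthogonal a b hab := by
    rw [Matrix.diagonal_mul_diagonal]
    have h0 : (fun y => (if y = a then (1:ℂ) else 0) * (if y = b then (1:ℂ) else 0))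
        = fun _ => (0:ℂ) := by
      funext y
      by_cases h : y = a <;> by_cases h' : y = b <;> simp_all
    rw [h0, Matrix.diagonal_zero]
  complete := by
    ext y z
    rw [Matrix.sum_apply]
    by_cases h : y = z
    · subst h
      simp [Matrix.diagonal_apply, Matrix.one_apply]
    · simp [Matrix.diagonal_apply, Matrix.one_apply, h]

/-- A two-layer quantum network: qubit `q` comes from source `src q` and is sent to
measurement node `node q`. -/
structure Net (Nq Ns Nm : ℕ) where
  src : Fin Nq → Fin Ns
  node : Fin Nq → Fin Nm

namespace Net

variable {Nq Ns Nm : ℕ}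

/-- Assumption A2: each source sends at most one qubit to any given measurement node. -/
def A2 (N : Net Nq Ns Nm) : Prop :=
  Function.Injective fun q => (N.src q, N.node q)

/-- Assumption A1 (GHZ preparation): every source has at least two qubits.  The GHZ
state preparation itself is hard-coded in `ghzState`. -/
def A1 (N : Net Nq Ns Nm) : Prop :=
  ∀ i : Fin Ns, 2 ≤ Fintype.card {q : Fin Nq // N.src q = i}

/-- Amplitude of the network state `⊗ᵢ |GHZ_{Λᵢ}⟩`: the amplitude at a bit string `x`
is the product over sources of `1/√2` if `x` is constant on the source, else `0`. -/
def ghzVec (N : Net Nq Ns Nm) : (Fin Nq → Fin 2) → ℂ :=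
  fun x => ∏ i : Fin Ns,
    if ∃ b : Fin 2, ∀ q, N.src q = i → x q = b then ((Real.sqrt 2 : ℝ) : ℂ)⁻¹ else 0

/-- The (pure) network state `|ψ⟩⟨ψ|` with `|ψ⟩ = ⊗ᵢ |GHZ_{Λᵢ}⟩`. -/
def ghzState (N : Net Nq Ns Nm) : Matrix (Fin Nq → Fin 2) (Fin Nq → Fin 2) ℂ :=
  Matrix.of fun x y => N.ghzVec x * star (N.ghzVec y)

/-- Partial trace of a full network state onto the qubits at node `j`. -/
def reduceNode (N : Net Nq Ns Nm) (j : Fin Nm)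
    (ρ : Matrix (Fin Nq → Fin 2) (Fin Nq → Fin 2) ℂ) :
    Matrix ({q : Fin Nq // N.node q = j} → Fin 2)
      ({q : Fin Nq // N.node q = j} → Fin 2) ℂ :=
  Matrix.of fun x y => ∑ z : {q : Fin Nq // N.node q ≠ j} → Fin 2,
    ρ (fun q => if h : N.node q = j then x ⟨q, h⟩ else z ⟨q, h⟩)
      (fun q => if h : N.node q = j then y ⟨q, h⟩ else z ⟨q, h⟩)

/-- Combine assignments on the qubits of nodes `i` and `j` with an assignment on the
remaining qubits into a full assignment. -/
def mergePair (N : Net Nq Ns Nm) (i j : Fin Nm)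
    (x : ({q : Fin Nq // N.node q = i} → Fin 2) × ({q : Fin Nq // N.node q = j} → Fin 2))
    (z : {q : Fin Nq // N.node q ≠ i ∧ N.node q ≠ j} → Fin 2) : Fin Nq → Fin 2 :=
  fun q =>
    if h : N.node q = i then x.1 ⟨q, h⟩
    else if h' : N.node q = j then x.2 ⟨q, h'⟩
    else z ⟨q, ⟨h, h'⟩⟩

/-- Partial trace of a full network state onto the qubits at the two nodes `i` and `j`,
as a bipartite state (first tensor factor: node `i`; second: node `j`). -/
def reducePair (N : Net Nq Ns Nm) (i j : Fin Nm)
    (ρ : Matrix (Fin Nq → Fin 2) (Fin Nq → Fin 2) ℂ) :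
    Matrix (({q : Fin Nq // N.node q = i} → Fin 2) × ({q : Fin Nq // N.node q = j} → Fin 2))
      (({q : Fin Nq // N.node q = i} → Fin 2) × ({q : Fin Nq // N.node q = j} → Fin 2)) ℂ :=
  Matrix.of fun x y => ∑ z : {q : Fin Nq // N.node q ≠ i ∧ N.node q ≠ j} → Fin 2,
    ρ (N.mergePair i j x z) (N.mergePair i j y z)

/-- `N_s^{A_j}`: the number of sources having a qubit at node `j`. -/
def nSrcAt (N : Net Nq Ns Nm) (j : Fin Nm) : ℕ :=
  Fintype.card {i : Fin Ns // ∃ q, N.src q = i ∧ N.node q = j}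

/-- `N_s^{A_i,A_j}`: the number of sources having qubits at both nodes `i` and `j`. -/
def nShared (N : Net Nq Ns Nm) (i j : Fin Nm) : ℕ :=
  Fintype.card
    {k : Fin Ns // (∃ q, N.src q = k ∧ N.node q = i) ∧ (∃ q, N.src q = k ∧ N.node q = j)}

/-- The full noisy network state `⊗ᵢ E_γ(|GHZ_{Λᵢ}⟩⟨GHZ_{Λᵢ}|)`, where `E_γ` is the
depolarizing channel of strength `γ` acting jointly on the qubits of each source. -/
def depolGhzState (N : Net Nq Ns Nm) (γ : ℝ) :
    Matrix (Fin Nq → Fin 2) (Fin Nq → Fin 2) ℂ :=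
  Matrix.of fun x y => ∏ i : Fin Ns,
    ((1 - (γ : ℂ)) *
        ((if ∃ b : Fin 2, ∀ q, N.src q = i → x q = b then ((Real.sqrt 2 : ℝ) : ℂ)⁻¹ else 0) *
          star (if ∃ b : Fin 2, ∀ q, N.src q = i → y q = b
            then ((Real.sqrt 2 : ℝ) : ℂ)⁻¹ else 0))
      + (γ : ℂ) * ((2 : ℂ) ^ Fintype.card {q : Fin Nq // N.src q = i})⁻¹ *
          (if ∀ q, N.src q = i → x q = y q then 1 else 0))

end Net

/-- Two networks (with the same node set) have the same topology if there are bijections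
of their qubit sets, source sets and node sets commuting with the source and node maps. -/
def SameTopology {Nq₁ Ns₁ Nq₂ Ns₂ Nm : ℕ} (N₁ : Net Nq₁ Ns₁ Nm) (N₂ : Net Nq₂ Ns₂ Nm) :
    Prop :=
  ∃ (eqv : Fin Nq₁ ≃ Fin Nq₂) (esv : Fin Ns₁ ≃ Fin Ns₂) (emv : Fin Nm ≃ Fin Nm),
    (∀ q, N₂.src (eqv q) = esv (N₁.src q)) ∧ (∀ q, N₂.node (eqv q) = emv (N₁.node q))

/-! Mutual information is at most `log₂ K` as soon as `p_AB ≤ K p_A p_B` pointwise, and equals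
`log₂ K` if moreover equality holds wherever `p_AB ≠ 0`; the theorem is the case `K = 2 ^ n` with
`n` the number of shared sources.

Expanding the GHZ states, `2 ^ N_s * tr ((A ⊗ B) ρ)` is the sum of `A c w * B c w` over the pairs of
strings `c, w` of source bits that agree on every source with a qubit outside the two nodes, the
arguments of `A` and `B` being the bits the nodes receive. When `A` or `B` is the identity only the
terms `c = w` survive. Positivity of `A` and `B` bounds the off-diagonal terms by products of
diagonal entries, and these are summed over the larger set of pairs agreeing off the shared
sources, where exchanging bits between `c` and `w` decouples the two nodes:
`tr ((A ⊗ B) ρ) ≤ 2 ^ n * tr ((A ⊗ 1) ρ) * tr ((1 ⊗ B) ρ)`. For the computational basis the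
outcomes of positive probability fix the shared bits, and the inequality is an equality.
-/

section ClassicalMutualInformation

variable {α β : Type*} [Fintype α] [Fintype β]

/-- The mutual information `H(p_α) + H(p_β) - H(p)` of a joint distribution `p` on `α × β`. -/
def mutualInfo (p : α × β → ℝ) : ℝ :=
  shannon (fun a => ∑ b, p (a, b)) + shannon (fun b => ∑ a, p (a, b)) - shannon p

theorem mutualInfo_eq_sum (p : α × β → ℝ) :
    mutualInfo p = ∑ x, p x *
      (Real.logb 2 (p x) - Real.logb 2 (∑ b, p (x.1, b)) - Real.logb 2 (∑ a, p (a, x.2))) := by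
  have left : ∑ a, (∑ b, p (a, b)) * Real.logb 2 (∑ b, p (a, b))
      = ∑ x : α × β, p x * Real.logb 2 (∑ b, p (x.1, b)) := by
    simp only [Fintype.sum_prod_type, Finset.sum_mul]
  have right : ∑ b, (∑ a, p (a, b)) * Real.logb 2 (∑ a, p (a, b))
      = ∑ x : α × β, p x * Real.logb 2 (∑ a, p (a, x.2)) := by
    simp only [Fintype.sum_prod_type_right, Finset.sum_mul]
  simp only [mutualInfo, shannon, left, right, mul_sub, Finset.sum_sub_distrib]
  ring

theorem mutualInfo_le_logb {p : α × β → ℝ} {K : ℝ} (hp : ∀ x, 0 ≤ p x) (hp1 : ∑ x, p x = 1)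
    (hK : ∀ x, p x ≤ K * ((∑ b, p (x.1, b)) * ∑ a, p (a, x.2))) :
    mutualInfo p ≤ Real.logb 2 K := by
  rw [mutualInfo_eq_sum, ← one_mul (Real.logb 2 K), ← hp1, Finset.sum_mul]
  refine Finset.sum_le_sum fun x _ => ?_
  rcases (hp x).eq_or_lt with hx | hx
  · simp [← hx]
  have hpos := hx.trans_le (hK x)
  have hlog := Real.logb_le_logb_of_le one_lt_two hx (hK x)
  rw [Real.logb_mul (left_ne_zero_of_mul hpos.ne') (right_ne_zero_of_mul hpos.ne'),
    Real.logb_mul (left_ne_zero_of_mul (right_ne_zero_of_mul hpos.ne'))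
      (right_ne_zero_of_mul (right_ne_zero_of_mul hpos.ne'))] at hlog
  exact mul_le_mul_of_nonneg_left (by linarith) hx.le

theorem mutualInfo_eq_logb {p : α × β → ℝ} {K : ℝ} (hp1 : ∑ x, p x = 1)
    (hK : ∀ x, p x ≠ 0 → p x = K * ((∑ b, p (x.1, b)) * ∑ a, p (a, x.2))) :
    mutualInfo p = Real.logb 2 K := by
  rw [mutualInfo_eq_sum, ← one_mul (Real.logb 2 K), ← hp1, Finset.sum_mul]
  refine Finset.sum_congr rfl fun x _ => ?_
  rcases eq_or_ne (p x) 0 with hx | hx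
  · simp [hx]
  have hne := hK x hx ▸ hx
  congr 1
  rw [hK x hx, Real.logb_mul (left_ne_zero_of_mul hne) (right_ne_zero_of_mul hne),
    Real.logb_mul (left_ne_zero_of_mul (right_ne_zero_of_mul hne))
      (right_ne_zero_of_mul (right_ne_zero_of_mul hne))]
  ring

end ClassicalMutualInformation

section PositiveSemidefinite

open scoped ComplexOrder

variable {d : Type*}

theorem re_trace_mul_nonneg_of_isIdempotentElem [Fintype d] {R ρ : Matrix d d ℂ}
    (hR : R.IsHermitian) (hRR : IsIdempotentElem R) (hρ : ρ.PosSemidef) : 0 ≤ (R * ρ).trace.re := by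
  have h := (hρ.mul_mul_conjTranspose_same R).trace_nonneg
  rw [hR.eq, Matrix.trace_mul_comm, ← mul_assoc, hRR.eq] at h
  exact (Complex.nonneg_iff.1 h).1

theorem two_mul_re_apply_le_of_posSemidef [Finite d] {M : Matrix d d ℂ} (hM : M.PosSemidef)
    (x y : d) : 2 * (M x y).re ≤ (M x x).re + (M y y).re := by
  cases nonempty_fintype d
  have hyx : (M y x).re = (M x y).re := by
    rw [← hM.isHermitian.apply, Complex.star_def, Complex.conj_re]
  have h := hM.re_dotProduct_nonneg (Pi.single x 1 - Pi.single y 1)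
  simp only [star_sub, Matrix.mulVec_sub, sub_dotProduct, dotProduct_sub, Pi.star_single, star_one,
    single_one_dotProduct, Matrix.mulVec_single_one, Matrix.col_apply, map_sub,
    RCLike.re_to_complex, hyx] at h
  linarith

/-- Positivity of `A ⊗ Bᵀ` on `e_x ⊗ e_y - e_y ⊗ e_x`. -/
theorem two_mul_re_apply_mul_apply_le [Finite d] {A B : Matrix d d ℂ} (hA : A.PosSemidef)
    (hB : B.PosSemidef) (x y : d) :
    2 * (A x y * B x y).re ≤ (A x x).re * (B y y).re + (A y y).re * (B x x).re := by
  have him {M : Matrix d d ℂ} (hM : M.PosSemidef) (z : d) : (M z z).im = 0 :=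
    (Complex.nonneg_iff.1 hM.diag_nonneg).2.symm
  simpa [Matrix.kronecker_apply, him hA, him hB]
    using two_mul_re_apply_le_of_posSemidef (hA.kronecker hB.transpose) (x, y) (y, x)

theorem sum_re_apply_mul_apply_le [Fintype d] {A B : Matrix d d ℂ} (hA : A.PosSemidef)
    (hB : B.PosSemidef) {r : d → d → Prop} [DecidableRel r] (hr : ∀ x y, r x y → r y x) :
    (∑ x, ∑ y with r x y, (A x y * B x y).re) ≤ ∑ x, ∑ y with r x y, (A x x).re * (B y y).re := by
  have swap : (∑ x, ∑ y with r x y, (A y y).re * (B x x).re)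
      = ∑ x, ∑ y with r x y, (A x x).re * (B y y).re :=
    Finset.sum_comm' fun x y => by simpa using ⟨hr x y, hr y x⟩
  have le : (∑ x, ∑ y with r x y, 2 * (A x y * B x y).re)
      ≤ ∑ x, ∑ y with r x y, ((A x x).re * (B y y).re + (A y y).re * (B x x).re) :=
    Finset.sum_le_sum fun x _ => Finset.sum_le_sum fun y _ =>
      two_mul_re_apply_mul_apply_le hA hB x y
  rw [Finset.sum_congr rfl fun x _ => (Finset.mul_sum ..).symm, ← Finset.mul_sum] at le
  simp only [Finset.sum_add_distrib, swap] at le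
  linarith

end PositiveSemidefinite

section Coordinates

variable {ι κ R : Type*} [Fintype ι] [DecidableEq ι] [Fintype κ] [CommSemiring R]

theorem card_filter_piecewise_eq (s : Finset ι) {c w : ι → κ} (h : Set.EqOn c w ↑sᶜ) :
    Finset.card {u | s.piecewise u c = w} = Fintype.card κ ^ sᶜ.card := by
  have : ({u | s.piecewise u c = w} : Finset (ι → κ))
      = Fintype.piFinset fun k => if k ∈ s then {w k} else Finset.univ := by
    ext u
    simp only [Finset.mem_filter_univ, Fintype.mem_piFinset, funext_iff]
    refine forall_congr' fun k => ?_
    by_cases hk : k ∈ s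
    · simp [hk]
    · simpa [hk] using h (by simpa using hk)
  rw [this, Fintype.card_piFinset]
  simp [apply_ite Finset.card, Finset.prod_ite, Finset.filter_not, Finset.compl_eq_univ_sdiff]

theorem sum_piecewise_eq (s : Finset ι) (c : ι → κ) (g : (ι → κ) → R) :
    ∑ u, g (s.piecewise u c)
      = (Fintype.card κ : R) ^ sᶜ.card * ∑ w with Set.EqOn c w ↑sᶜ, g w := by
  have himage : Finset.univ.image (fun u => s.piecewise u c)
      = ({w | Set.EqOn c w ↑sᶜ} : Finset (ι → κ)) := by
    ext w
    simp only [Finset.mem_image, Finset.mem_univ, true_and, Finset.mem_filter]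
    refine ⟨?_, fun h => ⟨w, ?_⟩⟩
    · rintro ⟨u, rfl⟩ k hk
      simp_all
    · ext k
      by_cases hk : k ∈ s
      · simp [hk]
      · simpa [hk] using h (by simpa using hk)
  rw [Finset.sum_comp g fun u => s.piecewise u c, himage, Finset.mul_sum]
  refine Finset.sum_congr rfl fun w hw => ?_
  rw [card_filter_piecewise_eq s (Finset.mem_filter.1 hw).2, nsmul_eq_mul, Nat.cast_pow]

/-- Exchanging the coordinates of `c` and `u` outside `s` is an involution of the pairs `(c, u)`;
it turns the argument of `g` into a string that agrees with `u` on `t`. -/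
theorem sum_mul_piecewise_inter {s t : Finset ι} {f g : (ι → κ) → R} (hf : DependsOn f s)
    (hg : DependsOn g t) :
    ∑ c, ∑ u, f c * g ((s ∩ t).piecewise u c) = (∑ c, f c) * ∑ c, g c := by
  let exchange (p : (ι → κ) × (ι → κ)) := (s.piecewise p.1 p.2, s.piecewise p.2 p.1)
  have involutive : Function.Involutive exchange := fun p => by
    ext k <;> by_cases hk : k ∈ s <;> simp [exchange, hk]
  rw [Finset.sum_mul_sum, ← Fintype.sum_prod_type', ← Fintype.sum_prod_type']
  refine Fintype.sum_equiv involutive.toPerm _ _ fun p => ?_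
  refine congrArg₂ (· * ·) (hf fun k hk => ?_) (hg fun k hk => ?_)
  · simp_all [exchange]
  · by_cases hs : k ∈ s <;> simp_all [exchange]

theorem card_pow_mul_sum_eqOn_compl_inter {s t : Finset ι} {f g : (ι → κ) → R}
    (hf : DependsOn f s) (hg : DependsOn g t) :
    (Fintype.card κ : R) ^ (s ∩ t)ᶜ.card *
      ∑ c, ∑ w with Set.EqOn c w ↑(s ∩ t)ᶜ, f c * g w = (∑ c, f c) * ∑ c, g c := by
  simp only [← sum_mul_piecewise_inter hf hg, ← Finset.mul_sum, sum_piecewise_eq]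
  rw [Finset.mul_sum]
  exact Finset.sum_congr rfl fun c _ => mul_left_comm ..

theorem sum_eqOn_compl_inter_mul_eq {s t : Finset ι} {f g : (ι → κ) → R} {d : ι → κ}
    (hf : ∀ c, f c ≠ 0 → Set.EqOn c d s) (hg : ∀ c, g c ≠ 0 → Set.EqOn c d t) :
    ∑ c, ∑ w with Set.EqOn c w ↑(s ∩ t)ᶜ, f c * g w = ∑ c, f c * g c := by
  refine Finset.sum_congr rfl fun c _ => Finset.sum_eq_single_of_mem c ?_ fun w hw hwc => ?_
  · simp [Set.eqOn_refl]
  by_contra hne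
  refine hwc (funext fun k => ?_)
  by_cases hk : k ∈ s ∩ t
  · rw [hf c (left_ne_zero_of_mul hne) (Finset.mem_inter.1 hk).1,
      hg w (right_ne_zero_of_mul hne) (Finset.mem_inter.1 hk).2]
  · exact ((Finset.mem_filter.1 hw).2 (by simpa [-not_and, not_and_or] using hk)).symm

end Coordinates

section LocalMeasurements

open scoped ComplexOrder

variable {dA dB ιA ιB : Type*} [Fintype dA] [DecidableEq dA] [Fintype dB] [DecidableEq dB]

theorem PVM.posSemidef_proj (P : PVM ιA dA) (a : ιA) : (P.proj a).PosSemidef := by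
  have h := Matrix.posSemidef_conjTranspose_mul_self (P.proj a)
  rwa [(P.herm a).eq, P.idem] at h

variable (P : PVM ιA dA) (Q : PVM ιB dB) {ρ : Matrix (dA × dB) (dA × dB) ℂ}

theorem jointProb_nonneg (hρ : ρ.PosSemidef) (x : ιA × ιB) : 0 ≤ jointProb P Q ρ x := by
  refine re_trace_mul_nonneg_of_isIdempotentElem ?_ ?_ hρ
  · rw [Matrix.IsHermitian, Matrix.conjTranspose_kronecker, (P.herm _).eq, (Q.herm _).eq]
  · rw [IsIdempotentElem, ← Matrix.mul_kronecker_mul, P.idem, Q.idem]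

theorem sum_jointProb_right (ρ : Matrix (dA × dB) (dA × dB) ℂ) (a : ιA) :
    letI := Q.fintype
    ∑ b, jointProb P Q ρ (a, b) = ((P.proj a ⊗ₖ (1 : Matrix dB dB ℂ)) * ρ).trace.re := by
  let := Q.fintype
  have h : P.proj a ⊗ₖ (1 : Matrix dB dB ℂ) = ∑ b, P.proj a ⊗ₖ Q.proj b :=
    Q.complete ▸ map_sum (Matrix.kroneckerBilinear (R := ℂ) (P.proj a)) Q.proj _
  simp [jointProb, h, Finset.sum_mul, Matrix.trace_sum]

theorem sum_jointProb_left (ρ : Matrix (dA × dB) (dA × dB) ℂ) (b : ιB) :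
    letI := P.fintype
    ∑ a, jointProb P Q ρ (a, b) = (((1 : Matrix dA dA ℂ) ⊗ₖ Q.proj b) * ρ).trace.re := by
  let := P.fintype
  have h : (1 : Matrix dA dA ℂ) ⊗ₖ Q.proj b = ∑ a, P.proj a ⊗ₖ Q.proj b :=
    P.complete ▸ map_sum ((Matrix.kroneckerBilinear (R := ℂ)).flip (Q.proj b)) P.proj _
  simp [jointProb, h, Finset.sum_mul, Matrix.trace_sum]

theorem sum_jointProb (ρ : Matrix (dA × dB) (dA × dB) ℂ) :
    letI := P.fintype; letI := Q.fintype
    ∑ x, jointProb P Q ρ x = ρ.trace.re := by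
  let := P.fintype; let := Q.fintype
  have h : ∑ a, P.proj a ⊗ₖ (1 : Matrix dB dB ℂ) = 1 := by
    rw [← Matrix.one_kronecker_one, ← P.complete]
    exact (map_sum ((Matrix.kroneckerBilinear (R := ℂ)).flip (1 : Matrix dB dB ℂ)) P.proj _).symm
  simp only [Fintype.sum_prod_type, sum_jointProb_right]
  rw [← Complex.re_sum, ← Matrix.trace_sum, ← Finset.sum_mul, h, one_mul]

theorem miOf_le_logb (hρ : ρ.PosSemidef) (hρ1 : ρ.trace = 1) {K : ℝ}
    (hK : ∀ (A : Matrix dA dA ℂ) (B : Matrix dB dB ℂ), A.PosSemidef → B.PosSemidef →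
      ((A ⊗ₖ B) * ρ).trace.re ≤ K * (((A ⊗ₖ 1) * ρ).trace.re * ((1 ⊗ₖ B) * ρ).trace.re)) :
    miOf P Q ρ ≤ Real.logb 2 K := by
  let := P.fintype; let := Q.fintype
  refine mutualInfo_le_logb (jointProb_nonneg P Q hρ) ?_ fun x => ?_
  · rw [sum_jointProb, hρ1, Complex.one_re]
  · rw [sum_jointProb_right, sum_jointProb_left]
    exact hK _ _ (P.posSemidef_proj _) (Q.posSemidef_proj _)

theorem miOf_eq_logb (hρ1 : ρ.trace = 1) {K : ℝ}
    (hK : ∀ x, jointProb P Q ρ x ≠ 0 → jointProb P Q ρ x =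
      K * (((P.proj x.1 ⊗ₖ 1) * ρ).trace.re * ((1 ⊗ₖ Q.proj x.2) * ρ).trace.re)) :
    miOf P Q ρ = Real.logb 2 K := by
  let := P.fintype; let := Q.fintype
  refine mutualInfo_eq_logb ?_ fun x hx => ?_
  · rw [sum_jointProb, hρ1, Complex.one_re]
  · rw [sum_jointProb_right, sum_jointProb_left, hK x hx]

end LocalMeasurements

namespace Net

variable {Nq Ns Nm : ℕ} (N : Net Nq Ns Nm) {i j : Fin Nm}

section Topology

/-- No source is empty or confined to a single node: each sends qubits to at least two different
nodes. It may send several to the same node. -/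
def ReachesTwoNodes : Prop :=
  ∀ k, (N.node '' (N.src ⁻¹' {k})).Nontrivial

/-- The sources of the qubits satisfying `p`. -/
def sources (p : Fin Nq → Prop) : Finset (Fin Ns) :=
  Finset.image N.src {q | p q}

variable {N}

theorem A1.reachesTwoNodes (hA1 : N.A1) (hA2 : N.A2) : N.ReachesTwoNodes := by
  intro k
  obtain ⟨⟨a, ha⟩, ⟨b, hb⟩, hab⟩ := Fintype.one_lt_card_iff.1 (hA1 k)
  refine ⟨_, ⟨a, ha, rfl⟩, _, ⟨b, hb, rfl⟩, fun h => hab (Subtype.ext (hA2 ?_))⟩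
  simp [ha, hb, h]

theorem ReachesTwoNodes.src_surjective (hN : N.ReachesTwoNodes) : Function.Surjective N.src := by
  intro k
  obtain ⟨_, q, hq, -⟩ := (hN k).nonempty
  exact ⟨q, hq⟩

theorem mem_sources {p : Fin Nq → Prop} {k : Fin Ns} :
    k ∈ N.sources p ↔ ∃ q, p q ∧ N.src q = k := by
  simp [sources]

theorem ReachesTwoNodes.compl_sources_inter_subset (hN : N.ReachesTwoNodes) :
    (N.sources (N.node · = i) ∩ N.sources (N.node · = j))ᶜ ⊆
      N.sources fun q => N.node q ≠ i ∧ N.node q ≠ j := by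
  intro k hk
  by_contra houtside
  have hinside (q) (hq : N.src q = k) : N.node q = i ∨ N.node q = j := by
    by_contra! h
    exact houtside (mem_sources.2 ⟨q, h, hq⟩)
  obtain ⟨_, ⟨a, ha, rfl⟩, _, ⟨b, hb, rfl⟩, hab⟩ := hN k
  simp only [Finset.mem_compl, Finset.mem_inter, mem_sources] at hk
  rcases hinside a ha with hai | haj <;> rcases hinside b hb with hbi | hbj
  · exact hab (hai.trans hbi.symm)
  · exact hk ⟨⟨a, hai, ha⟩, ⟨b, hbj, hb⟩⟩
  · exact hk ⟨⟨b, hbi, hb⟩, ⟨a, haj, ha⟩⟩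
  · exact hab (haj.trans hbj.symm)

theorem card_sources_inter :
    (N.sources (N.node · = i) ∩ N.sources (N.node · = j)).card = N.nShared i j := by
  rw [nShared, Fintype.card_subtype]
  congr 1
  ext k
  simp [mem_sources, and_comm]

end Topology

section LocalStrings

variable (p : Fin Nq → Prop)

/-- The bit string on the qubits satisfying `p` when each source `k` emits `c k` on all of its
qubits. -/
def bits (c : Fin Ns → Fin 2) : {q // p q} → Fin 2 :=
  fun q => c (N.src q)

variable {N p}

theorem bits_eq_bits_iff {c w : Fin Ns → Fin 2} :
    N.bits p c = N.bits p w ↔ Set.EqOn c w (N.sources p) := by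
  simp [funext_iff, bits, Set.EqOn, mem_sources]

theorem dependsOn_comp_bits {β : Type*} (F : ({q // p q} → Fin 2) → β) :
    DependsOn (fun c => F (N.bits p c)) (N.sources p) :=
  fun _ _ h => congrArg F (bits_eq_bits_iff.2 h)

end LocalStrings

section ReducedState

open scoped ComplexOrder

/-- `mergePair` as a bijection: its inverse restricts an assignment to the qubits at `i`, at `j` and
elsewhere. -/
def mergePairEquiv (hij : i ≠ j) :
    (({q // N.node q = i} → Fin 2) × ({q // N.node q = j} → Fin 2)) ×
      ({q // N.node q ≠ i ∧ N.node q ≠ j} → Fin 2) ≃ (Fin Nq → Fin 2) where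
  toFun s := N.mergePair i j s.1 s.2
  invFun x := ((fun q => x q, fun q => x q), fun q => x q)
  left_inv s := by
    ext ⟨q, hq⟩
    · simp [mergePair, hq]
    · simp [mergePair, hq, hij.symm]
    · simp [mergePair, hq]
  right_inv x := by
    ext q
    by_cases hi : N.node q = i
    · simp [mergePair, hi]
    · by_cases hj : N.node q = j <;> simp [mergePair, hi, hj]

variable {N}

theorem ghzVec_comp_src (c : Fin Ns → Fin 2) :
    N.ghzVec (c ∘ N.src) = ((√2 : ℝ) : ℂ)⁻¹ ^ Ns := by
  have (k : Fin Ns) : ∃ b, ∀ q, N.src q = k → (c ∘ N.src) q = b := ⟨c k, fun _ h => h ▸ rfl⟩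
  rw [ghzVec, Finset.prod_congr rfl fun k _ => if_pos (this k), Finset.prod_const,
    Finset.card_univ, Fintype.card_fin]

theorem ghzVec_eq_zero {x : Fin Nq → Fin 2} (hx : x ∉ Set.range (· ∘ N.src)) :
    N.ghzVec x = 0 := by
  have : ∃ k, ¬ ∃ b, ∀ q, N.src q = k → x q = b := by
    by_contra! h
    choose c hc using h
    exact hx ⟨c, funext fun q => (hc _ q rfl).symm⟩
  obtain ⟨k, hk⟩ := this
  exact Finset.prod_eq_zero (Finset.mem_univ k) (if_neg hk)

theorem sum_mul_ghzState (hN : Function.Surjective N.src)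
    (F : (Fin Nq → Fin 2) → (Fin Nq → Fin 2) → ℂ) :
    ∑ x, ∑ y, F x y * N.ghzState y x
      = ((2 : ℝ) ^ Ns)⁻¹ • ∑ c, ∑ w, F (c ∘ N.src) (w ∘ N.src) := by
  have hcoeff (c w : Fin Ns → Fin 2) :
      N.ghzState (w ∘ N.src) (c ∘ N.src) = (((2 : ℝ) ^ Ns)⁻¹ : ℝ) := by
    have : (√2)⁻¹ ^ Ns * (√2)⁻¹ ^ Ns = ((2 : ℝ) ^ Ns)⁻¹ := by
      rw [← mul_pow, ← mul_inv, Real.mul_self_sqrt zero_le_two, inv_pow]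
    rw [← this]
    simp [ghzState, ghzVec_comp_src]
  simp only [Finset.smul_sum]
  refine (Fintype.sum_of_injective _ hN.injective_comp_right _ _ (fun x hx => ?_)
    fun c => ?_).symm
  · simp [ghzState, ghzVec_eq_zero hx]
  · refine Fintype.sum_of_injective _ hN.injective_comp_right _ _ (fun y hy => ?_) fun w => ?_
    · simp [ghzState, ghzVec_eq_zero hy]
    · rw [hcoeff, Complex.real_smul, mul_comm]

theorem trace_mul_reducePair (hij : i ≠ j)
    (M : Matrix (({q // N.node q = i} → Fin 2) × ({q // N.node q = j} → Fin 2)) _ ℂ)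
    (σ : Matrix (Fin Nq → Fin 2) (Fin Nq → Fin 2) ℂ) :
    (M * N.reducePair i j σ).trace =
      ∑ x, ∑ y, (if ((N.mergePairEquiv hij).symm x).2 = ((N.mergePairEquiv hij).symm y).2
        then M ((N.mergePairEquiv hij).symm x).1 ((N.mergePairEquiv hij).symm y).1
        else 0) * σ y x := by
  have split (F : (Fin Nq → Fin 2) → ℂ) :
      ∑ x, F x = ∑ u, ∑ z, F (N.mergePairEquiv hij (u, z)) := by
    rw [← (N.mergePairEquiv hij).sum_comp, Fintype.sum_prod_type]
  simp only [split, Equiv.symm_apply_apply, ite_mul, zero_mul, Finset.sum_ite_eq, Finset.mem_univ,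
    if_true, Matrix.trace, Matrix.diag_apply, Matrix.mul_apply, reducePair, Matrix.of_apply,
    Finset.mul_sum]
  exact Finset.sum_congr rfl fun u _ => Finset.sum_comm

theorem trace_mul_reducePair_ghzState (hij : i ≠ j) (hN : Function.Surjective N.src)
    (M : Matrix (({q // N.node q = i} → Fin 2) × ({q // N.node q = j} → Fin 2)) _ ℂ) :
    (M * N.reducePair i j N.ghzState).trace = ((2 : ℝ) ^ Ns)⁻¹ •
      ∑ c, ∑ w with Set.EqOn c w (N.sources fun q => N.node q ≠ i ∧ N.node q ≠ j),
        M (N.bits (N.node · = i) c, N.bits (N.node · = j) c)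
          (N.bits (N.node · = i) w, N.bits (N.node · = j) w) := by
  rw [trace_mul_reducePair hij, sum_mul_ghzState hN]
  simp only [Finset.sum_filter, ← bits_eq_bits_iff]
  rfl

theorem posSemidef_ghzState : N.ghzState.PosSemidef :=
  Matrix.posSemidef_vecMulVec_self_star N.ghzVec

theorem posSemidef_reducePair {σ : Matrix (Fin Nq → Fin 2) (Fin Nq → Fin 2) ℂ}
    (hσ : σ.PosSemidef) : (N.reducePair i j σ).PosSemidef := by
  have : N.reducePair i j σ
      = ∑ z, σ.submatrix (N.mergePair i j · z) (N.mergePair i j · z) := by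
    ext x y
    simp [reducePair, Matrix.sum_apply]
  exact this ▸ Matrix.posSemidef_sum _ fun z _ => hσ.submatrix _

theorem ReachesTwoNodes.eq_of_eqOn (hN : N.ReachesTwoNodes) {c w : Fin Ns → Fin 2}
    {s : Finset (Fin Ns)} (hs : N.sources (N.node · = i) ∩ N.sources (N.node · = j) ⊆ s)
    (hsources : Set.EqOn c w s)
    (houtside : Set.EqOn c w (N.sources fun q => N.node q ≠ i ∧ N.node q ≠ j)) : c = w := by
  ext1 k
  by_cases hk : k ∈ N.sources (N.node · = i) ∩ N.sources (N.node · = j)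
  · exact hsources (hs hk)
  · exact houtside (hN.compl_sources_inter_subset (Finset.mem_compl.2 hk))

theorem ReachesTwoNodes.trace_mul_reducePair_ghzState_eq_sum_diag (hN : N.ReachesTwoNodes)
    (hij : i ≠ j)
    {M : Matrix (({q // N.node q = i} → Fin 2) × ({q // N.node q = j} → Fin 2)) _ ℂ}
    (hM : ∀ x y, x.1 ≠ y.1 → x.2 ≠ y.2 → M x y = 0) :
    (M * N.reducePair i j N.ghzState).trace = ((2 : ℝ) ^ Ns)⁻¹ •
      ∑ c, M (N.bits (N.node · = i) c, N.bits (N.node · = j) c)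
        (N.bits (N.node · = i) c, N.bits (N.node · = j) c) := by
  rw [trace_mul_reducePair_ghzState hij hN.src_surjective]
  congr 1
  refine Finset.sum_congr rfl fun c _ => Finset.sum_eq_single_of_mem c ?_
    fun w hw hwc => hM _ _ ?_ ?_
  · simp [Set.eqOn_refl]
  all_goals
    refine fun h => hwc (hN.eq_of_eqOn ?_ (bits_eq_bits_iff.1 h) (Finset.mem_filter.1 hw).2).symm
    simp

theorem ReachesTwoNodes.trace_reducePair_ghzState (hN : N.ReachesTwoNodes) (hij : i ≠ j) :
    (N.reducePair i j N.ghzState).trace = 1 := by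
  rw [← one_mul (N.reducePair i j N.ghzState), hN.trace_mul_reducePair_ghzState_eq_sum_diag hij]
  · simp
  · exact fun x y h _ => Matrix.one_apply_ne fun hxy => h (hxy ▸ rfl)

theorem ReachesTwoNodes.re_trace_kronecker_one_mul (hN : N.ReachesTwoNodes) (hij : i ≠ j)
    (A : Matrix ({q // N.node q = i} → Fin 2) _ ℂ) :
    ((A ⊗ₖ 1) * N.reducePair i j N.ghzState).trace.re
      = ((2 : ℝ) ^ Ns)⁻¹ * ∑ c, (A (N.bits _ c) (N.bits _ c)).re := by
  rw [hN.trace_mul_reducePair_ghzState_eq_sum_diag hij, Complex.smul_re, smul_eq_mul]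
  · simp [Complex.re_sum]
  · exact fun x y _ h => by simp [Matrix.one_apply_ne h]

theorem ReachesTwoNodes.re_trace_one_kronecker_mul (hN : N.ReachesTwoNodes) (hij : i ≠ j)
    (B : Matrix ({q // N.node q = j} → Fin 2) _ ℂ) :
    ((1 ⊗ₖ B) * N.reducePair i j N.ghzState).trace.re
      = ((2 : ℝ) ^ Ns)⁻¹ * ∑ c, (B (N.bits _ c) (N.bits _ c)).re := by
  rw [hN.trace_mul_reducePair_ghzState_eq_sum_diag hij, Complex.smul_re, smul_eq_mul]
  · simp [Complex.re_sum]
  · exact fun x y h _ => by simp [Matrix.one_apply_ne h]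

theorem sum_eqOn_compl_sources_inter {f g : (Fin Ns → Fin 2) → ℝ}
    (hf : DependsOn f (N.sources (N.node · = i))) (hg : DependsOn g (N.sources (N.node · = j))) :
    ((2 : ℝ) ^ Ns)⁻¹ * ∑ c, ∑ w with Set.EqOn c w
        ↑(N.sources (N.node · = i) ∩ N.sources (N.node · = j))ᶜ, f c * g w
      = 2 ^ N.nShared i j * ((((2 : ℝ) ^ Ns)⁻¹ * ∑ c, f c) * (((2 : ℝ) ^ Ns)⁻¹ * ∑ c, g c)) := by
  have hpow : (2 : ℝ) ^ Ns = 2 ^ N.nShared i j *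
      2 ^ (N.sources (N.node · = i) ∩ N.sources (N.node · = j))ᶜ.card := by
    rw [← card_sources_inter, ← pow_add, Finset.card_add_card_compl, Fintype.card_fin]
  have h := card_pow_mul_sum_eqOn_compl_inter hf hg
  rw [Fintype.card_fin, Nat.cast_ofNat] at h
  rw [mul_mul_mul_comm, ← h, hpow]
  field_simp

theorem ReachesTwoNodes.re_trace_kronecker_mul_le (hN : N.ReachesTwoNodes) (hij : i ≠ j)
    {A : Matrix ({q // N.node q = i} → Fin 2) _ ℂ} {B : Matrix ({q // N.node q = j} → Fin 2) _ ℂ}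
    (hA : A.PosSemidef) (hB : B.PosSemidef) :
    ((A ⊗ₖ B) * N.reducePair i j N.ghzState).trace.re ≤ 2 ^ N.nShared i j *
      (((A ⊗ₖ 1) * N.reducePair i j N.ghzState).trace.re *
        ((1 ⊗ₖ B) * N.reducePair i j N.ghzState).trace.re) := by
  let f c := (A (N.bits _ c) (N.bits _ c)).re
  let g c := (B (N.bits _ c) (N.bits _ c)).re
  have hf (c) : 0 ≤ f c := (Complex.nonneg_iff.1 hA.diag_nonneg).1
  have hg (c) : 0 ≤ g c := (Complex.nonneg_iff.1 hB.diag_nonneg).1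
  rw [hN.re_trace_kronecker_one_mul hij, hN.re_trace_one_kronecker_mul hij,
    ← sum_eqOn_compl_sources_inter (f := f) (g := g) (dependsOn_comp_bits fun x => (A x x).re)
      (dependsOn_comp_bits fun x => (B x x).re),
    Net.trace_mul_reducePair_ghzState hij hN.src_surjective, Complex.smul_re, smul_eq_mul]
  gcongr
  simp only [Complex.re_sum, Matrix.kronecker_apply]
  calc
    _ ≤ ∑ c, ∑ w with Set.EqOn c w (N.sources fun q => N.node q ≠ i ∧ N.node q ≠ j), f c * g w :=
      sum_re_apply_mul_apply_le (hA.submatrix (N.bits _)) (hB.submatrix (N.bits _))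
        fun _ _ h => h.symm
    _ ≤ _ := Finset.sum_le_sum fun c _ => Finset.sum_le_sum_of_subset_of_nonneg
      (Finset.monotone_filter_right _ fun w _ h => h.mono
        (Finset.coe_subset.2 hN.compl_sources_inter_subset)) fun w _ _ => mul_nonneg (hf c) (hg w)

theorem ReachesTwoNodes.jointProb_compPVM_of_ne_zero (hN : N.ReachesTwoNodes) (hij : i ≠ j)
    (x : ({q // N.node q = i} → Fin 2) × ({q // N.node q = j} → Fin 2))
    (hx : jointProb (compPVM _) (compPVM _) (N.reducePair i j N.ghzState) x ≠ 0) :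
    jointProb (compPVM _) (compPVM _) (N.reducePair i j N.ghzState) x = 2 ^ N.nShared i j *
      ((((compPVM _).proj x.1 ⊗ₖ 1) * N.reducePair i j N.ghzState).trace.re *
        ((1 ⊗ₖ (compPVM _).proj x.2) * N.reducePair i j N.ghzState).trace.re) := by
  let f c : ℝ := if N.bits (N.node · = i) c = x.1 then 1 else 0
  let g c : ℝ := if N.bits (N.node · = j) c = x.2 then 1 else 0
  have hf c : (compPVM _).proj x.1 (N.bits _ c) (N.bits _ c) = f c := by
    simp [compPVM, f, apply_ite Complex.ofReal]
  have hg c : (compPVM _).proj x.2 (N.bits _ c) (N.bits _ c) = g c := by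
    simp [compPVM, g, apply_ite Complex.ofReal]
  have hjoint : jointProb (compPVM _) (compPVM _) (N.reducePair i j N.ghzState) x
      = ((2 : ℝ) ^ Ns)⁻¹ * ∑ c, f c * g c := by
    rw [jointProb, hN.trace_mul_reducePair_ghzState_eq_sum_diag hij, Complex.smul_re, smul_eq_mul]
    · simp [hf, hg]
    · exact fun y z h _ => by simp [compPVM, h]
  rw [hjoint] at hx ⊢
  obtain ⟨d, -, hd⟩ := Finset.exists_ne_zero_of_sum_ne_zero (right_ne_zero_of_mul hx)
  obtain ⟨hdj, hdi⟩ : N.bits _ d = x.2 ∧ N.bits _ d = x.1 := by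
    simpa [f, g] using hd
  simp only [hN.re_trace_kronecker_one_mul hij, hN.re_trace_one_kronecker_mul hij, hf, hg,
    Complex.ofReal_re]
  rw [← sum_eqOn_compl_sources_inter, sum_eqOn_compl_inter_mul_eq (d := d)]
  · intro c hc
    exact bits_eq_bits_iff.1 (by simpa [f, hdi] using hc)
  · intro c hc
    exact bits_eq_bits_iff.1 (by simpa [g, hdj] using hc)
  · exact dependsOn_comp_bits fun y => if y = x.1 then (1 : ℝ) else 0
  · exact dependsOn_comp_bits fun y => if y = x.2 then (1 : ℝ) else 0

end ReducedState

end Net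

theorem measured_mutual_information_counts_shared_sources_general
    {Nq Ns Nm : ℕ} (N : Net Nq Ns Nm) (hN : N.ReachesTwoNodes) (i j : Fin Nm) (hij : i ≠ j) :
    measuredMI (N.reducePair i j N.ghzState) = (N.nShared i j : ℝ) ∧
    miOf (compPVM ({q : Fin Nq // N.node q = i} → Fin 2))
        (compPVM ({q : Fin Nq // N.node q = j} → Fin 2))
        (N.reducePair i j N.ghzState)
      = (N.nShared i j : ℝ) := by
  have htrace := hN.trace_reducePair_ghzState hij
  have hlog : Real.logb 2 (2 ^ N.nShared i j) = N.nShared i j := by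
    rw [Real.logb_pow, Real.logb_self_eq_one one_lt_two, mul_one]
  have upper {ιA ιB : Type} (P : PVM ιA _) (Q : PVM ιB _) :
      miOf P Q (N.reducePair i j N.ghzState) ≤ N.nShared i j :=
    hlog ▸ miOf_le_logb P Q (Net.posSemidef_reducePair Net.posSemidef_ghzState) htrace
      fun _ _ => hN.re_trace_kronecker_mul_le hij
  have attained : miOf (compPVM _) (compPVM _) (N.reducePair i j N.ghzState) = N.nShared i j :=
    hlog ▸ miOf_eq_logb _ _ htrace (hN.jointProb_compPVM_of_ne_zero hij)
  refine ⟨IsGreatest.csSup_eq ⟨⟨_, _, _, _, attained.symm⟩, ?_⟩, attained⟩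
  rintro _ ⟨ιA, ιB, P, Q, rfl⟩
  exact upper P Q

/-- in a GHZ network satisfying Assumptions A1 and A2, the measured
mutual information between two distinct nodes equals the number of sources they share,
and the supremum is attained by the computational-basis measurement at both nodes. -/
theorem measured_mutual_information_counts_shared_sources
    {Nq Ns Nm : ℕ} (N : Net Nq Ns Nm) (hA1 : N.A1) (hA2 : N.A2)
    (i j : Fin Nm) (hij : i ≠ j) :
    measuredMI (N.reducePair i j N.ghzState) = (N.nShared i j : ℝ) ∧
    miOf (compPVM ({q : Fin Nq // N.node q = i} → Fin 2))
        (compPVM ({q : Fin Nq // N.node q = j} → Fin 2))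
        (N.reducePair i j N.ghzState)
      = (N.nShared i j : ℝ) :=
  measured_mutual_information_counts_shared_sources_general N (hA1.reachesTwoNodes hA2) i j hij

end
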